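/- arXiv:2212.14330 — 3 statements merged into one kernel-verified Lean document; each statement's English description precedes it below -/
import Mathlib

section
/- Let m ∈ (0,1), α ∈ (0,1], q ≥ 2, and suppose s < max{1/2 − m/4 − (1−m)α/q, 1/2 − α/q}. Let μ be the Borel measure on ℝ given by dμ(x) = |x|^{α−1} dx restricted to (0,1). Then there is NO constant C > 0 such that (∫ (sup_{t∈(0,1)} |u_f(x,t)|)^q dμ(x))^{1/q} ≤ C ‖f‖_{H^s} holds for every Schwartz function f : ℝ → ℂ; that is, for every C > 0 there is a Schwartz function f violating the inequality. -/
open MeasureTheory Filter Set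
open scoped ENNReal NNReal

/-- Fourier transform `f̂(ξ) = ∫ e^{-ixξ} f(x) dx`. -/
noncomputable def FT (f : ℝ → ℂ) (ξ : ℝ) : ℂ :=
  ∫ x : ℝ, Complex.exp (-(Complex.I * (x : ℂ) * (ξ : ℂ))) * f x

/-- Sobolev norm `‖f‖_{H^s} = (∫ (1+ξ²)^s |f̂(ξ)|² dξ)^{1/2}` (as an extended nonnegative real). -/
noncomputable def HsNorm (s : ℝ) (f : ℝ → ℂ) : ℝ≥0∞ :=
  (∫⁻ ξ : ℝ, ENNReal.ofReal ((1 + ξ ^ 2) ^ s) * (‖FT f ξ‖₊ : ℝ≥0∞) ^ 2) ^ (1/2 : ℝ)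

/-- Truncated fractional Schrödinger wave
`S_R f(y,t) = (2π)⁻¹ ∫_{|ξ|≤R} e^{i(yξ + t|ξ|^m)} f̂(ξ) dξ`. -/
noncomputable def SR (m : ℝ) (f : ℝ → ℂ) (R y t : ℝ) : ℂ :=
  ((2 * Real.pi)⁻¹ : ℝ) *
    ∫ ξ in Set.Icc (-R) R, Complex.exp (Complex.I * ((y * ξ + t * |ξ| ^ m : ℝ) : ℂ)) * FT f ξ

/-- Fractional Schrödinger evolution
`u_f(y,t) = e^{it(−Δ)^{m/2}}f(y) = (2π)⁻¹ ∫ e^{i(yξ + t|ξ|^m)} f̂(ξ) dξ`. -/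
noncomputable def uF (m : ℝ) (f : ℝ → ℂ) (y t : ℝ) : ℂ :=
  ((2 * Real.pi)⁻¹ : ℝ) *
    ∫ ξ : ℝ, Complex.exp (Complex.I * ((y * ξ + t * |ξ| ^ m : ℝ) : ℂ)) * FT f ξ

section
open scoped FourierTransform ContDiff

theorem exists_FT_eq (A : ℝ) (b : ContDiffBump A) :
    ∃ f : SchwartzMap ℝ ℂ, ∀ ξ, FT (⇑f) ξ = ((b ξ : ℝ) : ℂ) := by
  have h2 : (2 * Real.pi) ≠ 0 := by positivity
  let e : ℝ ≃ₜ ℝ := Homeomorph.mulLeft₀ (2 * Real.pi) h2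
  have hc0 : HasCompactSupport (fun w : ℝ => b (2 * Real.pi * w)) :=
    b.hasCompactSupport.comp_homeomorph e
  have hc : HasCompactSupport (fun w : ℝ => ((b (2 * Real.pi * w) : ℝ) : ℂ)) :=
    hc0.comp_left (g := fun r : ℝ => (r : ℂ)) (by simp)
  have hd : ContDiff ℝ ∞ (fun w : ℝ => ((b (2 * Real.pi * w) : ℝ) : ℂ)) := by
    refine Complex.ofRealCLM.contDiff.comp ?_
    exact b.contDiff.comp (contDiff_const.mul contDiff_id)
  let G : SchwartzMap ℝ ℂ := hc.toSchwartzMap hd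
  refine ⟨𝓕⁻ G, fun ξ => ?_⟩
  have h1 : (𝓕 (𝓕⁻ G) : SchwartzMap ℝ ℂ) (ξ / (2 * Real.pi)) = G (ξ / (2 * Real.pi)) := by
    rw [FourierTransform.fourier_fourierInv_eq]
  rw [SchwartzMap.fourier_coe, Real.fourier_real_eq_integral_exp_smul] at h1
  have h3 : G (ξ / (2 * Real.pi)) = ((b ξ : ℝ) : ℂ) := by
    change ((b (2 * Real.pi * (ξ / (2 * Real.pi))) : ℝ) : ℂ) = _
    rw [mul_div_cancel₀ _ h2]
  rw [← h3, ← h1]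
  unfold FT
  congr 1
  ext x
  rw [smul_eq_mul]
  congr 2
  have : -2 * Real.pi * x * (ξ / (2 * Real.pi)) = - (x * ξ) := by field_simp
  rw [this]
  push_cast
  ring

theorem weight_bound (s N ξ : ℝ) (hN : 1 ≤ N) (h1 : N / 2 ≤ |ξ|) (h2 : |ξ| ≤ 3 * N / 2) :
    (1 + ξ ^ 2) ^ s ≤ 4 ^ |s| * N ^ (2 * s) := by
  have hN0 : 0 < N := by linarith
  have e : N ^ (2 * s) = (N ^ 2) ^ s := by
    rw [Real.rpow_mul hN0.le]; norm_num
  rw [e, ← sq_abs ξ]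
  rcases le_total 0 s with hs | hs
  · rw [abs_of_nonneg hs, ← Real.mul_rpow (by norm_num) (by positivity)]
    apply Real.rpow_le_rpow (by positivity) _ hs
    nlinarith [abs_nonneg ξ]
  · rw [abs_of_nonpos hs]
    have : (4 : ℝ) ^ (-s) = (1 / 4) ^ s := by
      rw [Real.rpow_neg (by norm_num), one_div, Real.inv_rpow (by norm_num)]
    rw [this, ← Real.mul_rpow (by norm_num) (by positivity)]
    apply Real.rpow_le_rpow_of_nonpos (by positivity) _ hs
    nlinarith [abs_nonneg ξ]

theorem Hs_bound (s N A W : ℝ) (hN : 1 ≤ N) (hA : |A| = N) (hW : 0 < W) (hWN : 4 * W ≤ N)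
    (b : ContDiffBump A) (hbo : b.rOut = 2 * W) (f : ℝ → ℂ)
    (hf : ∀ ξ, FT f ξ = ((b ξ : ℝ) : ℂ)) :
    HsNorm s f ≤ ENNReal.ofReal ((4 ^ |s| * N ^ (2 * s) * (4 * W)) ^ (1 / 2 : ℝ)) := by
  have hN0 : 0 < N := by linarith
  unfold HsNorm
  rw [← ENNReal.ofReal_rpow_of_nonneg (by positivity) (by norm_num)]
  apply ENNReal.rpow_le_rpow _ (by norm_num)
  calc _ ≤ ∫⁻ ξ : ℝ, (Metric.closedBall A (2 * W)).indicator
        (fun _ => ENNReal.ofReal (4 ^ |s| * N ^ (2 * s))) ξ := by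
        apply lintegral_mono
        intro ξ
        by_cases hx : ξ ∈ Metric.closedBall A (2 * W)
        · simp only [Set.indicator_of_mem hx]
          rw [Metric.mem_closedBall, Real.dist_eq] at hx
          have t1 := abs_sub_abs_le_abs_sub ξ A
          have t2 := abs_sub_abs_le_abs_sub A ξ
          rw [abs_sub_comm A ξ] at t2
          have hw := weight_bound s N ξ hN (by linarith) (by linarith)
          have hb : (‖FT f ξ‖₊ : ℝ≥0∞) ≤ 1 := by
            rw [hf]
            have : ‖((b ξ : ℝ) : ℂ)‖₊ ≤ 1 := by
              rw [← NNReal.coe_le_coe]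
              simp only [coe_nnnorm, Complex.norm_real, Real.norm_eq_abs, NNReal.coe_one]
              rw [abs_of_nonneg b.nonneg]
              exact b.le_one
            exact_mod_cast this
          calc _ ≤ ENNReal.ofReal (4 ^ |s| * N ^ (2 * s)) * 1 ^ 2 := by
                gcongr
            _ = _ := by simp
        · simp only [Set.indicator_of_notMem hx]
          rw [Metric.mem_closedBall, not_le] at hx
          have : b ξ = 0 := b.zero_of_le_dist (by rw [hbo]; exact hx.le)
          rw [hf, this]
          simp
    _ = _ := by
        rw [lintegral_indicator Metric.isClosed_closedBall.measurableSet]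
        rw [setLIntegral_const, Real.volume_closedBall, ← ENNReal.ofReal_mul (by positivity)]
        congr 1
        ring

theorem uF_bound (m A W x t θ : ℝ) (hW : 0 < W)
    (b : ContDiffBump A) (hbi : b.rIn = W) (hbo : b.rOut = 2 * W) (f : ℝ → ℂ)
    (hf : ∀ ξ, FT f ξ = ((b ξ : ℝ) : ℂ)) (hm : 0 < m)
    (hph : ∀ ξ, |ξ - A| ≤ 2 * W → |x * ξ + t * |ξ| ^ m - θ| ≤ 1) :
    W / (2 * Real.pi) ≤ ‖uF m f x t‖ := by
  set P : ℝ → ℝ := fun ξ => x * ξ + t * |ξ| ^ m with hP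
  have hPc : Continuous P := by
    have : Continuous (fun ξ : ℝ => |ξ| ^ m) :=
      continuous_abs.rpow_const (fun _ => Or.inr hm.le)
    fun_prop
  have hbI : Integrable (fun ξ => b ξ) := b.continuous.integrable_of_hasCompactSupport b.hasCompactSupport
  have hI : Integrable (fun ξ : ℝ => Complex.exp (Complex.I * ((P ξ - θ : ℝ) : ℂ)) * ((b ξ : ℝ) : ℂ)) := by
    apply Continuous.integrable_of_hasCompactSupport
    · have := b.continuous
      fun_prop
    · apply HasCompactSupport.mul_left
      exact b.hasCompactSupport.comp_left (g := fun r : ℝ => (r : ℂ)) (by simp)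
  have e1 : ∫ ξ : ℝ, Complex.exp (Complex.I * ((x * ξ + t * |ξ| ^ m : ℝ) : ℂ)) * FT f ξ
      = Complex.exp (Complex.I * θ) *
        ∫ ξ : ℝ, Complex.exp (Complex.I * ((P ξ - θ : ℝ) : ℂ)) * ((b ξ : ℝ) : ℂ) := by
    rw [← integral_const_mul]
    congr 1
    ext ξ
    rw [hf, ← mul_assoc, ← Complex.exp_add]
    congr 2
    simp only [hP]
    push_cast
    ring
  have e2 : W ≤ (∫ ξ : ℝ, Complex.exp (Complex.I * ((P ξ - θ : ℝ) : ℂ)) * ((b ξ : ℝ) : ℂ)).re := by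
    have hre := integral_re hI
    simp only [RCLike.re_eq_complex_re] at hre
    rw [← hre]
    have e3 : W = ∫ ξ, (Metric.closedBall A W).indicator (fun _ => (1 / 2 : ℝ)) ξ := by
      rw [integral_indicator Metric.isClosed_closedBall.measurableSet, setIntegral_const,
        measureReal_def, Real.volume_closedBall, ENNReal.toReal_ofReal (by positivity), smul_eq_mul]
      ring
    calc W = ∫ ξ, (Metric.closedBall A W).indicator (fun _ => (1 / 2 : ℝ)) ξ := e3
      _ ≤ _ := by
        apply integral_mono
        · rw [integrable_indicator_iff Metric.isClosed_closedBall.measurableSet]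
          exact integrableOn_const (by rw [Real.volume_closedBall]; exact ENNReal.ofReal_ne_top)
        · exact hI.re
        · intro ξ
          have er : (Complex.exp (Complex.I * ((P ξ - θ : ℝ) : ℂ)) * ((b ξ : ℝ) : ℂ)).re
              = Real.cos (P ξ - θ) * b ξ := by
            rw [mul_comm Complex.I, Complex.re_mul_ofReal, Complex.exp_ofReal_mul_I_re]
          simp only [er]
          by_cases h2 : |ξ - A| ≤ 2 * W
          · have hcos : 1 / 2 ≤ Real.cos (P ξ - θ) := by
              have h3 := Real.one_sub_sq_div_two_le_cos (x := P ξ - θ)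
              have h4 := hph ξ h2
              have h5 : (P ξ - θ) ^ 2 ≤ 1 := by
                rw [← sq_abs]; exact pow_le_one₀ (abs_nonneg _) h4
              linarith
            by_cases hx : ξ ∈ Metric.closedBall A W
            · rw [Set.indicator_of_mem hx, b.one_of_mem_closedBall (by rw [hbi]; exact hx)]
              linarith
            · rw [Set.indicator_of_notMem hx]
              exact mul_nonneg (by linarith) b.nonneg
          · rw [not_le] at h2
            have hx : ξ ∉ Metric.closedBall A W := by
              rw [Metric.mem_closedBall, Real.dist_eq]; linarith
            rw [Set.indicator_of_notMem hx, b.zero_of_le_dist (by rw [hbo, Real.dist_eq]; exact h2.le)]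
            simp
  have hpi := Real.pi_pos
  unfold uF
  rw [e1, norm_mul, norm_mul, mul_comm Complex.I, Complex.norm_exp_ofReal_mul_I, one_mul,
    Complex.norm_real, Real.norm_of_nonneg (by positivity), div_eq_inv_mul]
  gcongr
  exact e2.trans (Complex.re_le_norm _)

theorem key (m α q s C N A W δ : ℝ) (hm : 0 < m) (hα : 0 < α) (hα1 : α ≤ 1)
    (hq : 2 ≤ q) (hC : 0 < C) (hN : 1 ≤ N) (hA : |A| = N) (hW : 0 < W) (hWN : 4 * W ≤ N)
    (hδ : 0 < δ) (hδ1 : δ ≤ 1)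
    (hph : ∀ x ∈ Set.Ioo 0 δ, ∃ t ∈ Set.Ioo (0:ℝ) 1, ∃ θ : ℝ, ∀ ξ, |ξ - A| ≤ 2 * W →
      |x * ξ + t * |ξ| ^ m - θ| ≤ 1)
    (H : ∀ f : SchwartzMap ℝ ℂ,
      (∫⁻ x : ℝ, (⨆ t ∈ Set.Ioo (0:ℝ) 1, (‖uF m (⇑f) x t‖₊ : ℝ≥0∞)) ^ q
          ∂(((volume : Measure ℝ).restrict (Set.Ioo (0:ℝ) 1)).withDensity
              fun x => ENNReal.ofReal (|x| ^ (α - 1)))) ^ (1 / q) ≤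
        ENNReal.ofReal C * HsNorm s (⇑f)) :
    W ^ (1 / 2 : ℝ) * δ ^ (α / q) ≤ 2 * Real.pi * C * (4 ^ |s| * 4) ^ (1 / 2 : ℝ) * N ^ s := by
  have hN0 : 0 < N := by linarith
  have hpi := Real.pi_pos
  let b : ContDiffBump A := ⟨W, 2 * W, hW, by linarith⟩
  obtain ⟨f, hf⟩ := exists_FT_eq A b
  have h1 := H f
  have h2 := Hs_bound s N A W hN hA hW hWN b rfl f hf
  have h3 : ENNReal.ofReal ((W / (2 * Real.pi)) * δ ^ (α / q)) ≤
      (∫⁻ x : ℝ, (⨆ t ∈ Set.Ioo (0:ℝ) 1, (‖uF m (⇑f) x t‖₊ : ℝ≥0∞)) ^ q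
          ∂(((volume : Measure ℝ).restrict (Set.Ioo (0:ℝ) 1)).withDensity
              fun x => ENNReal.ofReal (|x| ^ (α - 1)))) ^ (1 / q) := by
    have e : (W / (2 * Real.pi)) * δ ^ (α / q) = ((W / (2 * Real.pi)) ^ q * δ ^ α) ^ (1 / q) := by
      rw [Real.mul_rpow (by positivity) (by positivity), ← Real.rpow_mul (by positivity),
        ← Real.rpow_mul (by positivity), mul_one_div_cancel (by linarith), Real.rpow_one,
        mul_one_div]
    rw [e, ← ENNReal.ofReal_rpow_of_nonneg (by positivity) (by positivity)]
    apply ENNReal.rpow_le_rpow _ (by positivity)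
    set ν := (((volume : Measure ℝ).restrict (Set.Ioo (0:ℝ) 1)).withDensity
              fun x => ENNReal.ofReal (|x| ^ (α - 1))) with hν
    have hνδ : ENNReal.ofReal (δ ^ α) ≤ ν (Set.Ioo 0 δ) := by
      rw [hν, withDensity_apply _ measurableSet_Ioo, Measure.restrict_restrict measurableSet_Ioo,
        Set.inter_eq_left.mpr (Set.Ioo_subset_Ioo_right hδ1)]
      calc ENNReal.ofReal (δ ^ α) = ∫⁻ x in Set.Ioo 0 δ, ENNReal.ofReal (δ ^ (α - 1)) := by
            rw [setLIntegral_const, Real.volume_Ioo, ← ENNReal.ofReal_mul (by positivity), sub_zero,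
              ← Real.rpow_add_one hδ.ne']
            ring_nf
        _ ≤ _ := by
            apply setLIntegral_mono' measurableSet_Ioo
            intro x hx
            apply ENNReal.ofReal_le_ofReal
            rw [abs_of_pos hx.1]
            exact Real.rpow_le_rpow_of_nonpos hx.1 hx.2.le (by linarith)
    calc ENNReal.ofReal ((W / (2 * Real.pi)) ^ q * δ ^ α)
        = ENNReal.ofReal ((W / (2 * Real.pi)) ^ q) * ENNReal.ofReal (δ ^ α) :=
          ENNReal.ofReal_mul (by positivity)
      _ ≤ ENNReal.ofReal ((W / (2 * Real.pi)) ^ q) * ν (Set.Ioo 0 δ) := by gcongr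
      _ = ∫⁻ x, (Set.Ioo 0 δ).indicator (fun _ => ENNReal.ofReal ((W / (2 * Real.pi)) ^ q)) x ∂ν := by
          rw [lintegral_indicator measurableSet_Ioo, setLIntegral_const]
      _ ≤ _ := by
          apply lintegral_mono
          intro x
          by_cases hx : x ∈ Set.Ioo 0 δ
          · simp only [Set.indicator_of_mem hx]
            obtain ⟨t, ht, θ, hθ⟩ := hph x hx
            have hb := uF_bound m A W x t θ hW b rfl rfl f hf hm hθ
            rw [← ENNReal.ofReal_rpow_of_nonneg (by positivity) (by linarith)]
            apply ENNReal.rpow_le_rpow _ (by linarith)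
            refine le_trans ?_ (le_iSup₂ (f := fun t (_ : t ∈ Set.Ioo (0:ℝ) 1) =>
              (‖uF m (⇑f) x t‖₊ : ℝ≥0∞)) t ht)
            calc _ ≤ ENNReal.ofReal ‖uF m (⇑f) x t‖ := ENNReal.ofReal_le_ofReal hb
              _ = _ := ofReal_norm_eq_enorm _
          · simp [Set.indicator_of_notMem hx]
  have h4 := (h3.trans h1).trans (mul_le_mul_right h2 _)
  rw [← ENNReal.ofReal_mul hC.le, ENNReal.ofReal_le_ofReal_iff (by positivity)] at h4
  have e5 : (4 ^ |s| * N ^ (2 * s) * (4 * W)) ^ (1 / 2 : ℝ)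
      = (4 ^ |s| * 4) ^ (1 / 2 : ℝ) * N ^ s * W ^ (1 / 2 : ℝ) := by
    rw [show (4:ℝ) ^ |s| * N ^ (2 * s) * (4 * W) = ((4 ^ |s| * 4) * N ^ (2 * s)) * W by ring,
      Real.mul_rpow (by positivity) hW.le, Real.mul_rpow (by positivity) (by positivity),
      ← Real.rpow_mul hN0.le]
    ring_nf
  rw [e5] at h4
  have e6 : W = W ^ (1 / 2 : ℝ) * W ^ (1 / 2 : ℝ) := by
    rw [← Real.rpow_add hW]; norm_num
  have hW2 : 0 < W ^ (1 / 2 : ℝ) := by positivity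
  refine le_of_mul_le_mul_left ?_ hW2
  calc _ = 2 * Real.pi * (W / (2 * Real.pi) * δ ^ (α / q)) := by
        rw [← mul_assoc, ← e6]; field_simp
    _ ≤ 2 * Real.pi * (C * ((4 ^ |s| * 4) ^ (1 / 2 : ℝ) * N ^ s * W ^ (1 / 2 : ℝ))) := by gcongr
    _ = _ := by ring

theorem taylor_bound (m v : ℝ) (hm : 0 < m) (hm1 : m < 1) (hv : |v| ≤ 1 / 2) :
    |(1 + v) ^ m - 1 - m * v| ≤ v ^ 2 := by
  have ⟨hv1, hv2⟩ := abs_le.mp hv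
  have b1 := rpow_one_add_le_one_add_mul_self (s := v) (by linarith) hm.le hm1.le
  have b2 := rpow_one_add_le_one_add_mul_self (s := v) (p := 1 - m) (by linarith) (by linarith)
    (by linarith)
  have hp : 0 < (1 + v) ^ m := Real.rpow_pos_of_pos (by linarith) _
  have e : (1 + v) ^ m * (1 + v) ^ (1 - m) = 1 + v := by
    rw [← Real.rpow_add (by linarith)]; simp
  have hD : 1 / 2 ≤ 1 + (1 - m) * v := by nlinarith
  have b3 : 1 + v ≤ (1 + v) ^ m * (1 + (1 - m) * v) := by
    calc 1 + v = (1 + v) ^ m * (1 + v) ^ (1 - m) := e.symm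
      _ ≤ _ := mul_le_mul_of_nonneg_left b2 hp.le
  rw [abs_le]
  constructor
  · by_contra hcon
    rw [not_le] at hcon
    have h1 : (1 + v) ^ m * (1 + (1 - m) * v) < (1 + m * v - v ^ 2) * (1 + (1 - m) * v) :=
      mul_lt_mul_of_pos_right (by linarith) (by linarith)
    have h2 : m * (1 - m) ≤ 1 / 4 := by nlinarith [sq_nonneg (m - 1 / 2)]
    nlinarith [mul_le_mul_of_nonneg_right h2 (sq_nonneg v), mul_le_mul_of_nonneg_right hD (sq_nonneg v)]
  · nlinarith [sq_nonneg v]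

theorem no_bound (w β a s K c d : ℝ) (hc : 0 < c) (hd : 0 < d) (ha : 0 ≤ a)
    (he : 0 < w / 2 - β * a - s)
    (h : ∀ N : ℝ, 1 ≤ N → (c * N ^ w) ^ (1 / 2 : ℝ) * (d * N ^ (-β)) ^ a ≤ K * N ^ s) : False := by
  have h1 : ∀ N : ℝ, 1 ≤ N → N ^ (w / 2 - β * a - s) ≤ K / (c ^ (1 / 2 : ℝ) * d ^ a) := by
    intro N hN
    have hN0 : 0 < N := by linarith
    have h2 := h N hN
    rw [Real.mul_rpow hc.le (by positivity), Real.mul_rpow hd.le (by positivity),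
      ← Real.rpow_mul hN0.le, ← Real.rpow_mul hN0.le] at h2
    rw [le_div_iff₀ (by positivity)]
    have e : N ^ (w / 2 - β * a - s) = N ^ (w * (1 / 2)) * N ^ (-β * a) / N ^ s := by
      rw [← Real.rpow_add hN0, ← Real.rpow_sub hN0]; ring_nf
    rw [e, div_mul_eq_mul_div, div_le_iff₀ (by positivity)]
    linarith
  have h3 := tendsto_rpow_atTop he
  obtain ⟨N, hN, hN1⟩ := ((h3.eventually_gt_atTop (K / (c ^ (1 / 2 : ℝ) * d ^ a))).and
    (eventually_ge_atTop 1)).exists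
  exact absurd (h1 N hN1) (not_le.mpr hN)

end

/-- Sharpness of the maximal estimate along a vertical line: if
`s < max{1/2 − m/4 − (1−m)α/q, 1/2 − α/q}`, then no constant `C` works for the measure
`dμ(x) = |x|^{α−1} dx` restricted to `(0,1)`. -/
theorem stmt2 (m α q s : ℝ) (hm : 0 < m) (hm1 : m < 1) (hα : 0 < α) (hα1 : α ≤ 1)
    (hq : 2 ≤ q)
    (hs : s < max (1 / 2 - m / 4 - (1 - m) * α / q) (1 / 2 - α / q)) :
    ¬ ∃ C > 0, ∀ f : SchwartzMap ℝ ℂ,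
      (∫⁻ x : ℝ, (⨆ t ∈ Set.Ioo (0:ℝ) 1, (‖uF m (⇑f) x t‖₊ : ℝ≥0∞)) ^ q
          ∂(((volume : Measure ℝ).restrict (Set.Ioo (0:ℝ) 1)).withDensity
              fun x => ENNReal.ofReal (|x| ^ (α - 1)))) ^ (1 / q) ≤
        ENNReal.ofReal C * HsNorm s (⇑f) := by
  rintro ⟨C, hC, H⟩
  have hq0 : 0 < q := by linarith
  rcases lt_max_iff.mp hs with hs | hs
  · refine no_bound (1 - m / 2) (1 - m) (α / q) s
      (2 * Real.pi * C * (4 ^ |s| * 4) ^ (1 / 2 : ℝ)) (1 / 4) m (by norm_num) hm (by positivity)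
      (by rw [← mul_div_assoc]; linarith) ?_
    intro N hN
    have hN0 : 0 < N := by linarith
    have hle : N ^ (-(1 - m)) ≤ 1 := Real.rpow_le_one_of_one_le_of_nonpos hN (by linarith)
    have hNm : 0 < N ^ (m / 2) := by positivity
    have hNm1 : 1 ≤ N ^ (m / 2) := Real.one_le_rpow hN (by linarith)
    have hsplit : N ^ (1 - m / 2) * N ^ (m / 2) = N := by
      rw [← Real.rpow_add hN0]; simp
    have hsq : N ^ (m / 2) * N ^ (m / 2) = N ^ m := by
      rw [← Real.rpow_add hN0]; ring_nf
    have hw0 : 0 < N ^ (1 - m / 2) := by positivity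
    have hwN : N ^ (1 - m / 2) ≤ N := by nlinarith
    refine key m α q s C N (-N) _ _ hm hα hα1 hq hC hN (by rw [abs_neg, abs_of_pos hN0])
      (by positivity) (by linarith) (by positivity) (by nlinarith) ?_ H
    rintro x ⟨hx0, hx1⟩
    have hinv : N ^ (-(1 - m)) * N ^ (1 - m) = 1 := by
      rw [← Real.rpow_add hN0]; simp
    have hNN : N ^ (1 - m) * N ^ m = N := by
      rw [← Real.rpow_add hN0]; simp
    have hp1 : 0 < N ^ (1 - m) := by positivity
    obtain ⟨t, ht⟩ : ∃ t, t = x * N ^ (1 - m) / m := ⟨_, rfl⟩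
    have ht0 : 0 < t := by rw [ht]; positivity
    have ht1 : t < 1 := by
      rw [ht, div_lt_one hm]
      calc _ < m * N ^ (-(1 - m)) * N ^ (1 - m) := by gcongr
        _ = m := by rw [mul_assoc, hinv, mul_one]
    have hmt : m * t * N ^ m = x * N := by
      have : m * t = x * N ^ (1 - m) := by rw [ht]; field_simp
      rw [this, mul_assoc, hNN]
    refine ⟨t, ⟨ht0, ht1⟩, -(x * N) + t * N ^ m, ?_⟩
    intro ξ hξ
    obtain ⟨v, hv⟩ : ∃ v, ξ = -(N * (1 + v)) := ⟨-ξ / N - 1, by field_simp; ring⟩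
    have hvN : N * |v| ≤ 1 / 2 * N ^ (1 - m / 2) := by
      have : ξ - -N = -(N * v) := by rw [hv]; ring
      rw [this, abs_neg, abs_mul, abs_of_pos hN0] at hξ
      linarith
    have hv1 : |v| * N ^ (m / 2) ≤ 1 / 2 := by
      have : N ^ (1 - m / 2) * (|v| * N ^ (m / 2)) ≤ N ^ (1 - m / 2) * (1 / 2) := by
        calc _ = N * |v| := by linear_combination |v| * hsplit
          _ ≤ _ := by linarith
      exact le_of_mul_le_mul_left this hw0
    have hv2 : |v| ≤ 1 / 2 := by nlinarith [abs_nonneg v]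
    have hT := taylor_bound m v hm hm1 hv2
    have h1v : 0 < 1 + v := by linarith [(abs_le.mp hv2).1]
    have habs : |ξ| ^ m = N ^ m * (1 + v) ^ m := by
      rw [hv, abs_neg, abs_of_pos (by positivity), Real.mul_rpow hN0.le h1v.le]
    have e : x * ξ + t * |ξ| ^ m - (-(x * N) + t * N ^ m)
        = t * N ^ m * ((1 + v) ^ m - 1 - m * v) := by
      rw [habs, hv]
      linear_combination v * hmt
    have hNmp : 0 < N ^ m := by positivity
    rw [e, abs_mul, abs_of_pos (by positivity)]
    calc t * N ^ m * |(1 + v) ^ m - 1 - m * v| ≤ 1 * N ^ m * v ^ 2 := by gcongr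
      _ = (|v| * N ^ (m / 2)) ^ 2 := by rw [mul_pow, sq_abs, ← hsq]; ring
      _ ≤ 1 := pow_le_one₀ (by positivity) (by linarith)
  · refine no_bound 1 1 (α / q) s
      (2 * Real.pi * C * (4 ^ |s| * 4) ^ (1 / 2 : ℝ)) (1 / 4) (1 / 4) (by norm_num) (by norm_num)
      (by positivity) (by linarith) ?_
    intro N hN
    have hN0 : 0 < N := by linarith
    have hle : N ^ (-1 : ℝ) ≤ 1 := Real.rpow_le_one_of_one_le_of_nonpos hN (by norm_num)
    refine key m α q s C N N _ _ hm hα hα1 hq hC hN (abs_of_pos hN0)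
      (by positivity) (by simp) (by positivity) (by linarith) ?_ H
    rintro x ⟨hx0, hx1⟩
    have hle2 : N ^ (-m) ≤ 1 := Real.rpow_le_one_of_one_le_of_nonpos hN (by linarith)
    have hpm : 0 < N ^ (-m) := by positivity
    refine ⟨N ^ (-m) / 4, ⟨by positivity, by linarith⟩, 0, ?_⟩
    intro ξ hξ
    rw [Real.rpow_one] at hξ
    have ⟨h1, h2⟩ := abs_le.mp hξ
    have hξ0 : 0 < ξ := by linarith
    have hxN : x * N < 1 / 4 := by
      calc x * N < 1 / 4 * N ^ (-1 : ℝ) * N := by gcongr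
        _ = 1 / 4 := by rw [Real.rpow_neg_one, mul_assoc, inv_mul_cancel₀ hN0.ne', mul_one]
    have hp : N ^ (-m) * |ξ| ^ m ≤ 3 / 2 := by
      rw [abs_of_pos hξ0]
      calc N ^ (-m) * ξ ^ m ≤ N ^ (-m) * (3 / 2 * N) ^ m := by gcongr; linarith
        _ = (3 / 2) ^ m := by
            rw [Real.mul_rpow (by norm_num) hN0.le, mul_left_comm, ← Real.rpow_add hN0]; simp
        _ ≤ (3 / 2) ^ (1 : ℝ) := Real.rpow_le_rpow_of_exponent_le (by norm_num) hm1.le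
        _ = _ := by simp
    have hx3 : x * ξ ≤ x * (3 / 2 * N) := by gcongr; linarith
    have hnn : 0 ≤ N ^ (-m) / 4 * |ξ| ^ m := by positivity
    rw [sub_zero, abs_of_nonneg (by positivity)]
    linarith
end

section
/- Let m ∈ (0,1), κ ≥ 1, θ > 0, α ∈ (0,1], q ≥ 2, and suppose s < max{1/2 − m/4, 1/2 − mα/q}. Let μ be the Borel measure on ℝ given by dμ(x) = |x|^{α−1} dx restricted to (0,1). Then there is NO constant C > 0 such that (∫ (sup_{t∈(0,1)} |u_f(x − θ t^κ, t)|)^q dμ(x))^{1/q} ≤ C ‖f‖_{H^s} holds for every Schwartz function f : ℝ → ℂ. -/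
open MeasureTheory Filter Set
open scoped ENNReal NNReal

open scoped FourierTransform ContDiff Topology in
theorem exists_FT_eq_s6 (g : ℝ → ℂ) (h1 : HasCompactSupport g) (h2 : ContDiff ℝ ∞ g) :
    ∃ f : SchwartzMap ℝ ℂ, ∀ ξ, FT f ξ = g ξ := by
  have hG2 : ContDiff ℝ ∞ (fun x : ℝ => g (2 * Real.pi * x)) := h2.comp (by fun_prop)
  have hG1 : HasCompactSupport (fun x : ℝ => g (2 * Real.pi * x)) := by
    have := h1.comp_homeomorph (Homeomorph.mulLeft₀ (2 * Real.pi) (by positivity))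
    exact this
  let G := hG1.toSchwartzMap hG2
  refine ⟨𝓕⁻ G, fun ξ => ?_⟩
  have h3 : 𝓕 (𝓕⁻ G) = G := FourierTransform.fourier_fourierInv_eq G
  have h4 : (𝓕 (𝓕⁻ G)) (ξ / (2 * Real.pi)) = g ξ := by
    rw [h3]
    change g _ = _
    congr 1
    field_simp
  rw [← h4, SchwartzMap.fourier_coe, Real.fourier_real_eq_integral_exp_smul]
  unfold FT
  congr 1
  ext x
  rw [smul_eq_mul]
  congr 2
  push_cast
  have : (Real.pi : ℂ) ≠ 0 := by exact_mod_cast Real.pi_ne_zero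
  field_simp

open scoped ContDiff Topology in
theorem exists_test (m a b A B : ℝ) (hb : 0 < b) (hab : b < a) :
    ∃ (ψ : ContDiffBump a) (f : SchwartzMap ℝ ℂ), ψ.rIn = b / 2 ∧ ψ.rOut = b ∧
      ∀ ξ, FT f ξ = Complex.exp (Complex.I * ((A * ξ - B * |ξ| ^ m : ℝ) : ℂ)) * (ψ ξ : ℂ) := by
  let ψ : ContDiffBump a := ⟨b / 2, b, by positivity, by linarith⟩
  refine ⟨ψ, ?_⟩
  suffices h : ∃ f : SchwartzMap ℝ ℂ, ∀ ξ, FT f ξ = Complex.exp (Complex.I * ((A * ξ - B * |ξ| ^ m : ℝ) : ℂ)) * (ψ ξ : ℂ) by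
    obtain ⟨f, hf⟩ := h
    exact ⟨f, rfl, rfl, hf⟩
  have hcs : HasCompactSupport (fun ξ => (ψ ξ : ℂ)) :=
    ψ.hasCompactSupport.comp_left (g := fun x : ℝ => (x : ℂ)) (by simp)
  apply exists_FT_eq_s6
  · exact hcs.mul_left
  · rw [contDiff_iff_contDiffAt]
    intro x
    have hψ : ContDiffAt ℝ ∞ (fun ξ => (ψ ξ : ℂ)) x :=
      (Complex.ofRealCLM.contDiff.comp ψ.contDiff).contDiffAt
    by_cases hx : x = 0
    · subst hx
      have h0 : (fun ξ : ℝ => Complex.exp (Complex.I * ((A * ξ - B * |ξ| ^ m : ℝ) : ℂ)) * (ψ ξ : ℂ)) =ᶠ[𝓝 0] fun _ => 0 := by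
        have : Iio (a - b) ∈ 𝓝 (0:ℝ) := Iio_mem_nhds (by linarith)
        filter_upwards [this] with ξ hξ
        have : ψ ξ = 0 := by
          apply ψ.zero_of_le_dist
          change b ≤ _
          rw [Real.dist_eq, abs_sub_comm]
          have := mem_Iio.1 hξ
          exact le_trans (by linarith) (le_abs_self _)
        simp [this]
      exact contDiffAt_const.congr_of_eventuallyEq h0
    · refine ContDiffAt.mul ?_ hψ
      apply ContDiffAt.cexp
      refine contDiffAt_const.mul ?_
      have h1 : ContDiffAt ℝ ∞ (fun ξ : ℝ => A * ξ - B * |ξ| ^ m) x := by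
        refine ContDiffAt.sub (by fun_prop) (contDiffAt_const.mul ?_)
        exact (contDiffAt_abs hx).rpow_const_of_ne (by simpa using hx)
      exact (Complex.ofRealCLM.contDiff.contDiffAt).comp x h1

theorem uF_lower (m a b A B : ℝ) (ψ : ContDiffBump a) (f : SchwartzMap ℝ ℂ)
    (h1 : ψ.rIn = b / 2) (h2 : ψ.rOut = b) (hb : 0 < b)
    (hf : ∀ ξ, FT f ξ = Complex.exp (Complex.I * ((A * ξ - B * |ξ| ^ m : ℝ) : ℂ)) * (ψ ξ : ℂ))
    (y t c : ℝ)
    (hc : ∀ ξ, |ξ - a| ≤ b → |y * ξ + t * |ξ| ^ m + (A * ξ - B * |ξ| ^ m) - c| ≤ 1) :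
    b / (4 * Real.pi) ≤ ‖uF m f y t‖ := by
  set P : ℝ → ℝ := fun ξ => y * ξ + t * |ξ| ^ m + (A * ξ - B * |ξ| ^ m) - c with hP
  have hPm : Measurable P := by fun_prop
  have key : ∀ ξ : ℝ, Complex.exp (Complex.I * ((y * ξ + t * |ξ| ^ m : ℝ) : ℂ)) * FT f ξ =
      Complex.exp (Complex.I * c) * (Complex.exp (Complex.I * (P ξ : ℂ)) * (ψ ξ : ℂ)) := by
    intro ξ
    rw [hf, ← mul_assoc, ← mul_assoc, ← Complex.exp_add, ← Complex.exp_add]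
    congr 2
    simp only [hP]
    push_cast
    ring
  have hint : Integrable (fun ξ => Complex.exp (Complex.I * (P ξ : ℂ)) * (ψ ξ : ℂ)) := by
    have hψ : Integrable (fun ξ => (ψ ξ : ℂ)) := ψ.integrable.ofReal
    refine hψ.bdd_mul (c := 1) (by fun_prop) ?_
    refine Eventually.of_forall fun ξ => ?_
    rw [mul_comm, Complex.norm_exp_ofReal_mul_I]
  have hre : b / 2 ≤ ‖∫ ξ, Complex.exp (Complex.I * (P ξ : ℂ)) * (ψ ξ : ℂ)‖ := by
    refine le_trans ?_ (Complex.re_le_norm _)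
    have e1 : (∫ ξ, Complex.exp (Complex.I * (P ξ : ℂ)) * (ψ ξ : ℂ)).re
        = ∫ ξ, (Complex.exp (Complex.I * (P ξ : ℂ)) * (ψ ξ : ℂ)).re := by
      simpa using (integral_re hint).symm
    rw [e1]
    have e2 : b ≤ ∫ ξ, ψ ξ := by
      have := ψ.measure_closedBall_le_integral (μ := (volume : Measure ℝ))
      rw [measureReal_def, Real.volume_closedBall, h1, ENNReal.toReal_ofReal (by linarith)] at this
      linarith
    calc b / 2 ≤ (∫ ξ, ψ ξ) * (1/2) := by linarith
      _ = ∫ ξ, ψ ξ * (1/2) := (integral_mul_const _ _).symm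
      _ ≤ _ := by
        refine integral_mono (ψ.integrable.mul_const _) hint.re ?_
        intro ξ
        have e3 : (Complex.exp (Complex.I * (P ξ : ℂ)) * (ψ ξ : ℂ)).re = Real.cos (P ξ) * ψ ξ := by
          rw [Complex.re_mul_ofReal, mul_comm Complex.I, Complex.exp_ofReal_mul_I_re]
        change ψ ξ * (1/2) ≤ (Complex.exp (Complex.I * (P ξ : ℂ)) * (ψ ξ : ℂ)).re
        rw [e3]
        by_cases hξ : |ξ - a| ≤ b
        · have h5 := hc ξ hξ
          have h6 := Real.one_sub_sq_div_two_le_cos (x := P ξ)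
          have h7 : (P ξ)^2 ≤ 1 := by rw [← sq_abs]; exact pow_le_one₀ (abs_nonneg _) h5
          nlinarith [ψ.nonneg' ξ]
        · have : ψ ξ = 0 := ψ.zero_of_le_dist (by rw [h2, Real.dist_eq]; linarith)
          simp [this]
  unfold uF
  simp_rw [key]
  rw [integral_const_mul, norm_mul, norm_mul, mul_comm Complex.I, Complex.norm_exp_ofReal_mul_I, one_mul, Complex.norm_real, Real.norm_eq_abs, abs_of_pos (by positivity)]
  calc b / (4 * Real.pi) = (2 * Real.pi)⁻¹ * (b / 2) := by field_simp; norm_num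
    _ ≤ _ := by gcongr

theorem Hs_upper (m a b A B s : ℝ) (ψ : ContDiffBump a) (f : SchwartzMap ℝ ℂ)
    (h2 : ψ.rOut = b) (hb : 0 < b) (hba : b ≤ a) (ha : 1 ≤ a) (hs : 0 ≤ s)
    (hf : ∀ ξ, FT f ξ = Complex.exp (Complex.I * ((A * ξ - B * |ξ| ^ m : ℝ) : ℂ)) * (ψ ξ : ℂ)) :
    HsNorm s f ≤ ENNReal.ofReal (((5 * a ^ 2) ^ s * (2 * b)) ^ (1 / 2 : ℝ)) := by
  unfold HsNorm
  rw [← ENNReal.ofReal_rpow_of_nonneg (by positivity) (by norm_num)]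
  gcongr
  have hn : ∀ ξ, ‖FT f ξ‖ = ψ ξ := by
    intro ξ
    rw [hf, norm_mul, mul_comm Complex.I, Complex.norm_exp_ofReal_mul_I, one_mul, Complex.norm_real,
      Real.norm_eq_abs, abs_of_nonneg (ψ.nonneg' ξ)]
  calc _ ≤ ∫⁻ ξ : ℝ, (Icc (a - b) (a + b)).indicator (fun _ => ENNReal.ofReal ((5 * a ^ 2) ^ s)) ξ := by
        refine lintegral_mono fun ξ => ?_
        by_cases hξ : ξ ∈ Icc (a - b) (a + b)
        · rw [indicator_of_mem hξ]
          have g1 : (‖FT f ξ‖₊ : ℝ≥0∞) ^ 2 ≤ 1 := by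
            apply pow_le_one₀ (by simp)
            rw [ENNReal.coe_le_one_iff, ← NNReal.coe_le_coe, coe_nnnorm, hn]
            exact ψ.le_one
          calc _ ≤ ENNReal.ofReal ((1 + ξ ^ 2) ^ s) * 1 := by gcongr
            _ ≤ _ := by
              rw [mul_one]
              gcongr
              obtain ⟨g2, g3⟩ := hξ
              nlinarith
        · rw [indicator_of_notMem hξ]
          have : ψ ξ = 0 := by
            apply ψ.zero_of_le_dist
            rw [h2, Real.dist_eq]
            by_contra hh
            push Not at hh
            rw [abs_lt] at hh
            exact hξ ⟨by linarith, by linarith⟩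
          have h0 : FT f ξ = 0 := by rw [← norm_eq_zero, hn, this]
          simp [h0]
    _ = _ := by
      rw [lintegral_indicator measurableSet_Icc, setLIntegral_const, Real.volume_Icc,
        ← ENNReal.ofReal_mul (by positivity)]
      congr 2
      ring

theorem HsNorm_mono (s s' : ℝ) (h : s ≤ s') (f : ℝ → ℂ) : HsNorm s f ≤ HsNorm s' f := by
  unfold HsNorm
  gcongr with ξ
  nlinarith [sq_nonneg ξ]

theorem mu_lower (α r : ℝ) (hα1 : α ≤ 1) (hr : 0 < r) (hr1 : r ≤ 1) :
    ENNReal.ofReal (r ^ α) ≤ (((volume : Measure ℝ).restrict (Set.Ioo (0:ℝ) 1)).withDensity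
              fun x => ENNReal.ofReal (|x| ^ (α - 1))) (Ioo 0 r) := by
  rw [withDensity_apply _ measurableSet_Ioo, Measure.restrict_restrict measurableSet_Ioo,
    inter_eq_left.2 (Ioo_subset_Ioo_right hr1)]
  calc ENNReal.ofReal (r ^ α) = ∫⁻ x in Ioo 0 r, ENNReal.ofReal (r ^ (α - 1)) := by
        rw [setLIntegral_const, Real.volume_Ioo, ← ENNReal.ofReal_mul (by positivity), sub_zero,
          Real.rpow_sub_one hr.ne', div_mul_cancel₀ _ hr.ne']
    _ ≤ _ := by
      refine setLIntegral_mono' measurableSet_Ioo fun x hx => ?_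
      apply ENNReal.ofReal_le_ofReal
      rw [abs_of_pos hx.1]
      exact Real.rpow_le_rpow_of_nonpos hx.1 hx.2.le (by linarith)

theorem core (m κ θ α q s s' C : ℝ) (hα1 : α ≤ 1) (hq : 2 ≤ q)
    (hss : s ≤ s') (hs' : 0 ≤ s') (hC : 0 < C)
    (H : ∀ f : SchwartzMap ℝ ℂ,
      (∫⁻ x : ℝ, (⨆ t ∈ Set.Ioo (0:ℝ) 1, (‖uF m (⇑f) (x - θ * t ^ κ) t‖₊ : ℝ≥0∞)) ^ q
          ∂(((volume : Measure ℝ).restrict (Set.Ioo (0:ℝ) 1)).withDensity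
              fun x => ENNReal.ofReal (|x| ^ (α - 1)))) ^ (1 / q) ≤
        ENNReal.ofReal C * HsNorm s (⇑f))
    (a b r A B : ℝ) (ha : 1 ≤ a) (hb : 0 < b) (hba : b < a) (hr : 0 < r) (hr1 : r ≤ 1)
    (hx : ∀ x ∈ Ioo 0 r, ∃ t ∈ Ioo (0:ℝ) 1, ∃ c, ∀ ξ, |ξ - a| ≤ b →
      |(x - θ * t ^ κ) * ξ + t * |ξ| ^ m + (A * ξ - B * |ξ| ^ m) - c| ≤ 1) :
    b ^ (1 / 2 : ℝ) * r ^ (α / q) ≤ (C * (4 * Real.pi) * (5 ^ s' * 2) ^ (1 / 2 : ℝ)) * a ^ s' := by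
  obtain ⟨ψ, f, h1, h2, hf⟩ := exists_test m a b A B hb hba
  have hq0 : 0 < q := by linarith
  have hH := H f
  have hup : HsNorm s f ≤ ENNReal.ofReal (((5 * a ^ 2) ^ s' * (2 * b)) ^ (1 / 2 : ℝ)) :=
    (HsNorm_mono s s' hss f).trans (Hs_upper m a b A B s' ψ f h2 hb hba.le ha hs' hf)
  have hlow : ENNReal.ofReal (b / (4 * Real.pi) * r ^ (α / q)) ≤
      (∫⁻ x : ℝ, (⨆ t ∈ Set.Ioo (0:ℝ) 1, (‖uF m (⇑f) (x - θ * t ^ κ) t‖₊ : ℝ≥0∞)) ^ q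
          ∂(((volume : Measure ℝ).restrict (Set.Ioo (0:ℝ) 1)).withDensity
              fun x => ENNReal.ofReal (|x| ^ (α - 1)))) ^ (1 / q) := by
    have e : b / (4 * Real.pi) * r ^ (α / q) = ((b / (4 * Real.pi)) ^ q * r ^ α) ^ (1 / q) := by
      rw [Real.mul_rpow (by positivity) (by positivity), ← Real.rpow_mul (by positivity),
        ← Real.rpow_mul hr.le, mul_one_div_cancel hq0.ne', Real.rpow_one, mul_one_div]
    rw [e, ← ENNReal.ofReal_rpow_of_nonneg (by positivity) (by positivity)]
    gcongr
    set μ := (((volume : Measure ℝ).restrict (Set.Ioo (0:ℝ) 1)).withDensity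
              fun x => ENNReal.ofReal (|x| ^ (α - 1))) with hμ
    calc ENNReal.ofReal ((b / (4 * Real.pi)) ^ q * r ^ α)
        = ENNReal.ofReal ((b / (4 * Real.pi)) ^ q) * ENNReal.ofReal (r ^ α) :=
          ENNReal.ofReal_mul (by positivity)
      _ ≤ ENNReal.ofReal ((b / (4 * Real.pi)) ^ q) * μ (Ioo 0 r) := by
          gcongr
          exact mu_lower α r hα1 hr hr1
      _ = ∫⁻ x in Ioo 0 r, ENNReal.ofReal ((b / (4 * Real.pi)) ^ q) ∂μ := by
          rw [setLIntegral_const]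
      _ ≤ ∫⁻ x in Ioo 0 r, (⨆ t ∈ Set.Ioo (0:ℝ) 1, (‖uF m (⇑f) (x - θ * t ^ κ) t‖₊ : ℝ≥0∞)) ^ q ∂μ := by
          refine setLIntegral_mono' measurableSet_Ioo fun x hxr => ?_
          obtain ⟨t, ht, c, hc⟩ := hx x hxr
          rw [← ENNReal.ofReal_rpow_of_nonneg (by positivity) hq0.le]
          gcongr
          refine le_trans ?_ (le_iSup₂ (f := fun t (_ : t ∈ Ioo (0:ℝ) 1) =>
            (‖uF m (⇑f) (x - θ * t ^ κ) t‖₊ : ℝ≥0∞)) t ht)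
          have := uF_lower m a b A B ψ f h1 h2 hb hf (x - θ * t ^ κ) t c hc
          change _ ≤ ‖uF m (⇑f) (x - θ * t ^ κ) t‖ₑ
          rw [← ofReal_norm]
          exact ENNReal.ofReal_le_ofReal this
      _ ≤ _ := setLIntegral_le_lintegral _ _
  have hfin : ENNReal.ofReal (b / (4 * Real.pi) * r ^ (α / q)) ≤
      ENNReal.ofReal (C * ((5 * a ^ 2) ^ s' * (2 * b)) ^ (1 / 2 : ℝ)) := by
    rw [ENNReal.ofReal_mul hC.le]
    exact hlow.trans (hH.trans (by gcongr))
  rw [ENNReal.ofReal_le_ofReal_iff (by positivity)] at hfin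
  have e2 : ((5 * a ^ 2) ^ s' * (2 * b)) ^ (1 / 2 : ℝ) =
      (5 ^ s' * 2) ^ (1 / 2 : ℝ) * a ^ s' * b ^ (1 / 2 : ℝ) := by
    have ha0 : 0 ≤ a := by linarith
    have e3 : (a ^ 2) ^ s' = (a ^ s') ^ 2 := by
      rw [← Real.rpow_natCast, ← Real.rpow_natCast, ← Real.rpow_mul ha0, ← Real.rpow_mul ha0, mul_comm]
    have e4 : ((a ^ s') ^ 2) ^ (1 / 2 : ℝ) = a ^ s' := by
      rw [← Real.sqrt_eq_rpow, Real.sqrt_sq (by positivity)]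
    rw [Real.mul_rpow (x := 5) (y := a ^ 2) (by norm_num) (by positivity), e3,
      show (5:ℝ) ^ s' * (a ^ s') ^ 2 * (2 * b) = (5 ^ s' * 2) * (a ^ s') ^ 2 * b by ring,
      Real.mul_rpow (by positivity) hb.le, Real.mul_rpow (by positivity) (by positivity), e4]
  have e5 : b = b ^ (1 / 2 : ℝ) * b ^ (1 / 2 : ℝ) := by
    rw [← Real.rpow_add hb]; norm_num
  rw [e2] at hfin
  have hbp : 0 < b ^ (1 / 2 : ℝ) := by positivity
  have hpi := Real.pi_pos
  refine le_of_mul_le_mul_left ?_ hbp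
  calc b ^ (1 / 2 : ℝ) * (b ^ (1 / 2 : ℝ) * r ^ (α / q))
      = (4 * Real.pi) * (b / (4 * Real.pi) * r ^ (α / q)) := by
        rw [← mul_assoc, ← e5]; field_simp
    _ ≤ (4 * Real.pi) * (C * ((5 ^ s' * 2) ^ (1 / 2 : ℝ) * a ^ s' * b ^ (1 / 2 : ℝ))) :=
        mul_le_mul_of_nonneg_left hfin (by positivity)
    _ = _ := by ring

theorem growth (D K p s' L : ℝ) (hD : 0 < D) (hp : s' < p)
    (h : ∀ l : ℝ, 1 ≤ l → L ≤ l → D * l ^ p ≤ K * l ^ s') : False := by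
  have ht : Tendsto (fun l : ℝ => l ^ (p - s')) atTop atTop := tendsto_rpow_atTop (by linarith)
  obtain ⟨l, h1, h2, h3⟩ := ((eventually_ge_atTop (1:ℝ)).and
    ((eventually_ge_atTop L).and (ht.eventually_gt_atTop (K / D)))).exists
  have hl : 0 < l := by linarith
  have h4 := h l h1 h2
  rw [div_lt_iff₀ hD, Real.rpow_sub hl, div_mul_eq_mul_div, lt_div_iff₀ (by positivity)] at h3
  linarith

theorem bern (m z : ℝ) (hm : 0 < m) (hm1 : m < 1) (hz : |z| ≤ 1 / 2) :
    |(1 + z) ^ m - 1 - m * z| ≤ z ^ 2 := by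
  obtain ⟨z1, z2⟩ := abs_le.1 hz
  have u1 := rpow_one_add_le_one_add_mul_self (s := z) (by linarith) hm.le hm1.le
  have u2 := rpow_one_add_le_one_add_mul_self (s := z) (by linarith) (p := 1 - m) (by linarith) (by linarith)
  have hp : 0 < 1 + z := by linarith
  have e : (1 + z) ^ m * (1 + z) ^ (1 - m) = 1 + z := by
    rw [← Real.rpow_add hp]; simp
  have hA : 0 < (1 + z) ^ m := by positivity
  have h3 : 1 + z ≤ (1 + z) ^ m * (1 + (1 - m) * z) := by
    calc 1 + z = _ := e.symm
      _ ≤ _ := by gcongr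
  have h5 : 1 / 2 ≤ 1 + (1 - m) * z := by nlinarith
  rw [abs_le]
  constructor
  · by_contra hh
    push Not at hh
    have h6 : (1 + z) ^ m * (1 + (1 - m) * z) ≤ (1 + m * z - z ^ 2) * (1 + (1 - m) * z) := by
      gcongr; linarith
    have h7 : (1 + z) ^ m * (1 + (1 - m) * z) < (1 + m * z - z ^ 2) * (1 + (1 - m) * z) := by
      apply mul_lt_mul_of_pos_right (by linarith) (by linarith)
    nlinarith [sq_nonneg z, sq_nonneg (m - 1/2), mul_nonneg (sq_nonneg z) (sq_nonneg (m - 1/2)), mul_nonneg (sq_nonneg z) (sub_nonneg.2 h5)]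
  · nlinarith [sq_nonneg z]

theorem stmt6 (m κ θ α q s : ℝ) (hm : 0 < m) (hm1 : m < 1) (hκ : 1 ≤ κ) (hθ : 0 < θ)
    (hα : 0 < α) (hα1 : α ≤ 1) (hq : 2 ≤ q)
    (hs : s < max (1 / 2 - m / 4) (1 / 2 - m * α / q)) :
    ¬ ∃ C > 0, ∀ f : SchwartzMap ℝ ℂ,
      (∫⁻ x : ℝ, (⨆ t ∈ Set.Ioo (0:ℝ) 1, (‖uF m (⇑f) (x - θ * t ^ κ) t‖₊ : ℝ≥0∞)) ^ q
          ∂(((volume : Measure ℝ).restrict (Set.Ioo (0:ℝ) 1)).withDensity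
              fun x => ENNReal.ofReal (|x| ^ (α - 1)))) ^ (1 / q) ≤
        ENNReal.ofReal C * HsNorm s (⇑f) := by
  rintro ⟨C, hC, H⟩
  have hq0 : 0 < q := by linarith
  have hκ0 : κ ≠ 0 := by linarith
  have hcore := core m κ θ α q s (max s 0) C hα1 hq (le_max_left _ _) (le_max_right _ _) hC H
  set s' := max s 0
  set K := C * (4 * Real.pi) * (5 ^ s' * 2) ^ (1 / 2 : ℝ)
  rcases lt_max_iff.1 hs with hs | hs
  · -- wave packets of width `l^{1-m/2}`
    have hs' : s' < 1 / 2 - m / 4 := max_lt hs (by linarith)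
    have ht : Tendsto (fun l : ℝ => l ^ (m - 1)) atTop (nhds 0) := by
      have := tendsto_rpow_neg_atTop (y := 1 - m) (by linarith)
      simpa using this
    obtain ⟨L, hL⟩ := eventually_atTop.1 (ht.eventually_lt_const (half_pos hθ))
    set r := min (θ / 2) 1
    have hr : 0 < r := by positivity
    refine growth ((1 / 2) ^ (1 / 2 : ℝ) * r ^ (α / q)) K (1 / 2 - m / 4) s' L (by positivity) hs' ?_
    intro l hl1 hlL
    have hl : 0 < l := by linarith
    have hb0 : l ^ (1 - m / 2) ≤ l := by
      calc l ^ (1 - m / 2) ≤ l ^ (1:ℝ) := Real.rpow_le_rpow_of_exponent_le hl1 (by linarith)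
        _ = l := Real.rpow_one l
    have key := hcore l (l ^ (1 - m / 2) / 2) r 0 0 hl1 (by positivity) (by linarith) hr
      (min_le_right _ _) ?_
    · convert key using 1
      rw [div_eq_mul_one_div (l ^ (1 - m / 2)), Real.mul_rpow (by positivity) (by norm_num), ← Real.rpow_mul hl.le,
        show (1 - m / 2) * (1 / 2) = 1 / 2 - m / 4 by ring]
      ring
    · intro x hx
      have hcont : ContinuousOn (fun t : ℝ => θ * t ^ κ - m * t * l ^ (m - 1)) (Icc 0 1) := by
        apply Continuous.continuousOn
        have := Real.continuous_rpow_const (q := κ) (by linarith)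
        fun_prop
      have hivt := intermediate_value_Ioo (zero_le_one (α := ℝ)) hcont
      obtain ⟨t, ht1, ht2⟩ := hivt (show x ∈ _ by
        simp only [Real.zero_rpow hκ0, Real.one_rpow]
        have h1 := hL l hlL
        have h2 : 0 < l ^ (m - 1) := by positivity
        have h3 := hx.2.trans_le (min_le_left _ _)
        exact ⟨by linarith [hx.1], by nlinarith⟩)
      refine ⟨t, ht1, (x - θ * t ^ κ) * l + t * l ^ m, fun ξ hξ => ?_⟩
      set z := (ξ - l) / l with hz
      have hz1 : |z| ≤ l ^ (- (m / 2)) / 2 := by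
        rw [hz, abs_div, abs_of_pos hl, div_le_iff₀ hl]
        refine hξ.trans (le_of_eq ?_)
        rw [show 1 - m / 2 = -(m / 2) + 1 by ring, Real.rpow_add_one hl.ne']
        ring
      have hz2 : l ^ (- (m / 2)) ≤ 1 := Real.rpow_le_one_of_one_le_of_nonpos hl1 (by linarith)
      have hbern := bern m z hm hm1 (by linarith)
      have hzz := abs_le.1 (show |z| ≤ 1 / 2 by linarith)
      have eξ : ξ = l * (1 + z) := by rw [hz]; field_simp; ring
      have hξ0 : 0 < ξ := by rw [eξ]; apply mul_pos hl; linarith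
      have e1 : |ξ| ^ m = l ^ m * (1 + z) ^ m := by
        rw [abs_of_pos hξ0, eξ, Real.mul_rpow hl.le (by linarith)]
      have e2 : l ^ (m - 1) * l = l ^ m := by
        rw [Real.rpow_sub_one hl.ne']; field_simp
      have e3 : (x - θ * t ^ κ) = - (m * t * l ^ (m - 1)) := by
        have : θ * t ^ κ - m * t * l ^ (m - 1) = x := ht2
        linarith
      have e4 : (x - θ * t ^ κ) * ξ + t * |ξ| ^ m + (0 * ξ - 0 * |ξ| ^ m) -
          ((x - θ * t ^ κ) * l + t * l ^ m) = t * (l ^ m * ((1 + z) ^ m - 1 - m * z)) := by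
        rw [e1, e3, eξ, ← e2]; ring
      rw [e4, abs_mul, abs_mul, abs_of_pos ht1.1, abs_of_pos (by positivity : 0 < l ^ m)]
      have hzsq : z ^ 2 ≤ (l ^ (- (m / 2)) / 2) ^ 2 := by
        rw [← sq_abs]; gcongr
      have e5 : l ^ m * (l ^ (- (m / 2))) ^ 2 = 1 := by
        rw [← Real.rpow_natCast, ← Real.rpow_mul hl.le, ← Real.rpow_add hl]
        norm_num
      have h9 : l ^ m * |(1 + z) ^ m - 1 - m * z| ≤ 1 := by
        calc _ ≤ l ^ m * (l ^ (- (m / 2)) / 2) ^ 2 := by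
              gcongr; exact hbern.trans hzsq
          _ = 1 / 4 := by rw [div_pow, ← mul_div_assoc, e5]; norm_num
          _ ≤ 1 := by norm_num
      exact mul_le_one₀ ht1.2.le (by positivity) h9
  · -- focusing at time `1/2`
    have hmaq : m * α / q < 1 / 2 := by
      rw [div_lt_iff₀ hq0]
      nlinarith [mul_lt_mul hm1 hα1 hα zero_le_one]
    have hs' : s' < 1 / 2 - m * α / q := max_lt hs (by linarith)
    set c0 := min (θ * (1 / 2) ^ κ) 1
    have hc0 : 0 < c0 := by positivity
    set d := c0 * 2 ^ (-m) / 2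
    have hd : 0 < d := by positivity
    refine growth ((1 / 2) ^ (1 / 2 : ℝ) * d ^ (α / q)) K (1 / 2 - m * α / q) s' 1 (by positivity) hs' ?_
    intro l hl1 _
    have hl : 0 < l := by linarith
    set τ0 := (2 * l) ^ (-m) / 2 with hτ0
    have hτpos : 0 < τ0 := by positivity
    have hτ1 : τ0 ≤ 1 / 2 := by
      have : (2 * l) ^ (-m) ≤ 1 := Real.rpow_le_one_of_one_le_of_nonpos (by linarith) (by linarith)
      linarith
    have er : d * l ^ (-m) = c0 * τ0 := by
      simp only [d, hτ0]
      rw [Real.mul_rpow (by norm_num) hl.le]; ring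
    have key := hcore l (l / 2) (d * l ^ (-m)) (θ * (1 / 2) ^ κ) (1 / 2) hl1 (by positivity)
      (by linarith) (by positivity) ?_ ?_
    · convert key using 1
      rw [div_eq_mul_one_div l, Real.mul_rpow hl.le (by norm_num),
        Real.mul_rpow hd.le (by positivity), ← Real.rpow_mul hl.le,
        show 1 / 2 - m * α / q = 1 / 2 + (-m) * (α / q) by ring, Real.rpow_add hl]
      ring
    · rw [er]
      have : c0 ≤ 1 := min_le_right _ _
      nlinarith
    · intro x hx
      rw [er] at hx
      have hcont : ContinuousOn (fun τ : ℝ => θ * (1 / 2 + τ) ^ κ - θ * (1 / 2) ^ κ) (Icc 0 τ0) := by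
        apply Continuous.continuousOn
        have := Real.continuous_rpow_const (q := κ) (by linarith)
        fun_prop
      have hivt := intermediate_value_Ioo hτpos.le hcont
      have hB : (1 / 2 : ℝ) ^ κ * (2 * τ0) ≤ (1 / 2 + τ0) ^ κ - (1 / 2) ^ κ := by
        have h1 := one_add_mul_self_le_rpow_one_add (s := 2 * τ0) (by linarith) hκ
        have h2 : (1 / 2 + τ0) ^ κ = (1 / 2) ^ κ * (1 + 2 * τ0) ^ κ := by
          rw [← Real.mul_rpow (by norm_num) (by positivity)]; congr 1; ring
        have h3 : (0:ℝ) < (1 / 2) ^ κ := by positivity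
        rw [h2]
        have h4 : 1 + 2 * τ0 ≤ (1 + 2 * τ0) ^ κ := by nlinarith
        nlinarith
      obtain ⟨τ, ht1, ht2⟩ := hivt (show x ∈ _ by
        have h3 : c0 * τ0 ≤ θ * (1 / 2) ^ κ * τ0 := by
          gcongr; exact min_le_left _ _
        have h5 : θ * ((1 / 2 : ℝ) ^ κ * (2 * τ0)) ≤ θ * ((1 / 2 + τ0) ^ κ - (1 / 2) ^ κ) := by
          gcongr
        have h6 : 0 < θ * (1 / 2) ^ κ * τ0 := by positivity
        refine ⟨?_, ?_⟩
        · simpa using hx.1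
        · have := hx.2
          change x < θ * (1 / 2 + τ0) ^ κ - θ * (1 / 2) ^ κ
          nlinarith)
      refine ⟨1 / 2 + τ, ⟨by linarith [ht1.1], by linarith [ht1.2]⟩, 0, fun ξ hξ => ?_⟩
      have e4 : (x - θ * (1 / 2 + τ) ^ κ) * ξ + (1 / 2 + τ) * |ξ| ^ m +
          (θ * (1 / 2) ^ κ * ξ - 1 / 2 * |ξ| ^ m) - 0 = τ * |ξ| ^ m := by
        have : θ * (1 / 2 + τ) ^ κ - θ * (1 / 2) ^ κ = x := ht2
        rw [← this]; ring
      have h5 : |ξ| ≤ 2 * l := by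
        have := abs_le.1 hξ
        rw [abs_le]; constructor <;> linarith
      rw [e4, abs_mul, abs_of_pos ht1.1, abs_of_nonneg (by positivity)]
      calc τ * |ξ| ^ m ≤ τ0 * (2 * l) ^ m := by
            gcongr
            exact ht1.2.le
        _ = 1 / 2 := by
            rw [hτ0, Real.rpow_neg (by positivity)]
            have : 0 < (2 * l) ^ m := by positivity
            field_simp
        _ ≤ 1 := by norm_num
end

section
/- Let m ∈ (0,1), q ≥ 2, r ∈ (0, 1/2), and set β = log 2 / log(1/r). Let Θ ⊆ [0,1] be the r-Cantor set Θ = {∑_{n=0}^∞ ε_n (1−r) r^n : ε : ℕ → {0,1}}. If s < 1/2 − m/q + mβ/q, then there is NO constant C > 0 such that (∫_0^1 (sup_{t∈(0,1), θ∈Θ} |u_f(x − θ t, t)|)^q dx)^{1/q} ≤ C ‖f‖_{H^s} holds for every Schwartz function f : ℝ → ℂ. -/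
open MeasureTheory Filter Set
open scoped ENNReal NNReal

/-- The `r`-Cantor set. -/
def CantorR (r : ℝ) : Set ℝ := {y : ℝ | ∃ a : ℕ → Bool,
                y = ∑' n : ℕ, (if a n then (1 - r) * r ^ n else 0)}

lemma cantorR_step (r : ℝ) (hr0 : 0 < r) (hr1 : r < 1/2) (y : ℝ) (hy : y ∈ CantorR r) (b : Bool) :
    (if b then (1 - r) else 0) + r * y ∈ CantorR r := by
  obtain ⟨a, rfl⟩ := hy
  refine ⟨fun n => Nat.casesOn n b a, ?_⟩
  have hs : ∀ a : ℕ → Bool, Summable (fun n : ℕ => if a n then (1 - r) * r ^ n else 0) := by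
    intro a
    have h := (summable_geometric_of_lt_one hr0.le (by linarith : r < 1)).mul_left (1 - r)
    refine Summable.of_nonneg_of_le (fun n => ?_) (fun n => ?_) h
    · split_ifs
      · have : 0 ≤ 1 - r := by linarith
        positivity
      · exact le_rfl
    · split_ifs
      · exact le_rfl
      · have : 0 ≤ 1 - r := by linarith
        positivity
  rw [(hs (fun n => Nat.casesOn n b a)).tsum_eq_zero_add, ← tsum_mul_left]
  congr 1
  · simp
  · refine tsum_congr fun n => ?_
    simp only [mul_ite, mul_zero]
    split_ifs <;> ring

lemma cantorR_zero (r : ℝ) : (0:ℝ) ∈ CantorR r := ⟨fun _ => false, by simp⟩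

lemma cantorR_finset (r : ℝ) (hr0 : 0 < r) (hr1 : r < 1/2) (k : ℕ) :
    ∃ F : Finset ℝ, F.card = 2 ^ k ∧ (∀ y ∈ F, y ∈ CantorR r ∧ 0 ≤ y ∧ y ≤ 1) ∧
      ∀ x ∈ F, ∀ y ∈ F, x < y → x + (1 - 2 * r) * r ^ k ≤ y := by
  induction k with
  | zero =>
    refine ⟨{0}, by simp, ?_, ?_⟩
    · intro y hy
      rw [Finset.mem_singleton] at hy
      subst hy
      exact ⟨cantorR_zero r, le_rfl, zero_le_one⟩
    · intro x hx y hy h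
      rw [Finset.mem_singleton] at hx hy
      subst hx; subst hy
      exact absurd h (lt_irrefl _)
  | succ k ih =>
    obtain ⟨F, hc, hF, hsep⟩ := ih
    have hinj1 : Function.Injective (fun y : ℝ => r * y) := fun x y h => by
      simpa [hr0.ne'] using h
    have hinj2 : Function.Injective (fun y : ℝ => (1 - r) + r * y) := fun x y h => by
      simpa [hr0.ne'] using h
    refine ⟨F.image (fun y => r * y) ∪ F.image (fun y => (1 - r) + r * y), ?_, ?_, ?_⟩
    · rw [Finset.card_union_of_disjoint, Finset.card_image_of_injective _ hinj1,
        Finset.card_image_of_injective _ hinj2, hc]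
      · ring
      · rw [Finset.disjoint_left]
        intro z hz hz'
        simp only [Finset.mem_image] at hz hz'
        obtain ⟨x, hx, rfl⟩ := hz
        obtain ⟨y, hy, h⟩ := hz'
        have h1 := (hF x hx).2.2
        have h2 := (hF y hy).2.1
        nlinarith
    · intro z hz
      simp only [Finset.mem_union, Finset.mem_image] at hz
      rcases hz with ⟨x, hx, rfl⟩ | ⟨x, hx, rfl⟩
      · obtain ⟨h0, h1, h2⟩ := hF x hx
        refine ⟨by simpa using cantorR_step r hr0 hr1 x h0 false, by positivity, by nlinarith⟩
      · obtain ⟨h0, h1, h2⟩ := hF x hx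
        refine ⟨by simpa using cantorR_step r hr0 hr1 x h0 true, by nlinarith, by nlinarith⟩
    · have hp : r ^ (k+1) ≤ 1 := pow_le_one₀ hr0.le (by linarith)
      have hp' : (1 - 2 * r) * r ^ (k + 1) ≤ 1 - 2 * r := by nlinarith
      intro z hz w hw hzw
      simp only [Finset.mem_union, Finset.mem_image] at hz hw
      rcases hz with ⟨x, hx, rfl⟩ | ⟨x, hx, rfl⟩ <;> rcases hw with ⟨y, hy, rfl⟩ | ⟨y, hy, rfl⟩
      · have h := hsep x hx y hy (lt_of_mul_lt_mul_left hzw hr0.le)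
        have := mul_le_mul_of_nonneg_left h hr0.le
        rw [pow_succ]; nlinarith
      · obtain ⟨-, h1, h2⟩ := hF x hx
        obtain ⟨-, h3, h4⟩ := hF y hy
        nlinarith
      · obtain ⟨-, h1, h2⟩ := hF x hx
        obtain ⟨-, h3, h4⟩ := hF y hy
        nlinarith
      · have h := hsep x hx y hy (lt_of_mul_lt_mul_left (by linarith) hr0.le)
        have := mul_le_mul_of_nonneg_left h hr0.le
        rw [pow_succ]; nlinarith

lemma exists_bumpN (N : ℝ) (hN : 0 < N) : ∃ φ : ℝ → ℝ, ContDiff ℝ ((⊤ : ℕ∞) : WithTop ℕ∞) φ ∧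
    (∀ x, 0 ≤ φ x) ∧ (∀ x, φ x ≤ 1) ∧ (∀ x ∈ Icc (5 * N / 4) (7 * N / 4), φ x = 1) ∧
    (∀ x, x ∉ Icc N (2 * N) → φ x = 0) := by
  let φ : ContDiffBump (3 * N / 2 : ℝ) := ⟨N / 4, N / 2, by positivity, by linarith⟩
  refine ⟨φ, φ.contDiff, fun x => φ.nonneg, fun x => φ.le_one, ?_, ?_⟩
  · intro x hx
    apply φ.one_of_mem_closedBall
    rw [Metric.mem_closedBall, Real.dist_eq, abs_le]
    change - (N/4) ≤ _ ∧ _ ≤ N / 4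
    constructor <;> linarith [hx.1, hx.2]
  · intro x hx
    apply φ.zero_of_le_dist
    change N / 2 ≤ _
    by_contra h
    push Not at h
    rw [Real.dist_eq, abs_lt] at h
    exact hx ⟨by linarith [h.1], by linarith [h.2]⟩

open FourierTransform in
lemma exists_schwartz_FT (G : ℝ → ℂ) (hG : ContDiff ℝ ((⊤ : ℕ∞) : WithTop ℕ∞) G)
    (hc : HasCompactSupport G) : ∃ f : SchwartzMap ℝ ℂ, ∀ ξ, FT f ξ = G ξ := by
  have hpi : (2 * Real.pi) ≠ 0 := by positivity
  have hc' : HasCompactSupport (fun w : ℝ => G ((2 * Real.pi) • w)) := hc.comp_smul hpi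
  have hG' : ContDiff ℝ ((⊤ : ℕ∞) : WithTop ℕ∞) (fun w : ℝ => G ((2 * Real.pi) • w)) :=
    hG.comp (contDiff_const_smul _)
  refine ⟨𝓕⁻ (hc'.toSchwartzMap hG'), fun ξ => ?_⟩
  have h1 : 𝓕 (𝓕⁻ (hc'.toSchwartzMap hG')) = hc'.toSchwartzMap hG' :=
    FourierTransform.fourier_fourierInv_eq _
  have h2 := congrArg (fun g : SchwartzMap ℝ ℂ => g (ξ / (2 * Real.pi))) h1
  simp only [SchwartzMap.fourier_coe] at h2
  have h3 : (hc'.toSchwartzMap hG') (ξ / (2 * Real.pi)) = G ξ := by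
    change G ((2 * Real.pi) • (ξ / (2 * Real.pi))) = G ξ
    rw [smul_eq_mul, mul_div_cancel₀ _ hpi]
  rw [h3] at h2
  rw [← h2, Real.fourier_real_eq_integral_exp_smul, FT]
  congr 1
  ext x
  rw [smul_eq_mul]
  congr 2
  push_cast
  have : (Real.pi : ℂ) ≠ 0 := by exact_mod_cast Real.pi_ne_zero
  field_simp

lemma G_smooth (m N : ℝ) (hN : 0 < N) (φ : ℝ → ℝ)
    (hφ : ContDiff ℝ ((⊤ : ℕ∞) : WithTop ℕ∞) φ) (h0 : ∀ x, x ∉ Icc N (2 * N) → φ x = 0) :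
    ContDiff ℝ ((⊤ : ℕ∞) : WithTop ℕ∞)
      (fun ξ : ℝ => Complex.exp (-(Complex.I * ((1/2 * |ξ| ^ m : ℝ) : ℂ))) * (φ ξ : ℂ)) := by
  rw [contDiff_iff_contDiffAt]
  intro x
  by_cases hx : x = 0
  · have : (fun ξ : ℝ => Complex.exp (-(Complex.I * ((1/2 * |ξ| ^ m : ℝ) : ℂ))) * (φ ξ : ℂ))
        =ᶠ[nhds x] fun _ => 0 := by
      filter_upwards [Iio_mem_nhds (show x < N by rw [hx]; exact hN)] with y hy
      rw [h0 y (fun h => absurd h.1 (not_le.mpr hy))]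
      simp
    exact contDiffAt_const.congr_of_eventuallyEq this
  · have h1 : ContDiffAt ℝ ((⊤ : ℕ∞) : WithTop ℕ∞) (fun ξ : ℝ => (1/2 * |ξ| ^ m : ℝ)) x :=
      contDiffAt_const.mul ((contDiffAt_abs hx).rpow_const_of_ne (abs_ne_zero.mpr hx))
    have h2 := (Complex.ofRealCLM.contDiff (n := ((⊤ : ℕ∞) : WithTop ℕ∞))).contDiffAt.comp x h1
    have h3 := (Complex.ofRealCLM.contDiff (n := ((⊤ : ℕ∞) : WithTop ℕ∞))).comp hφ
    exact ((contDiffAt_const.mul h2).neg.cexp).mul h3.contDiffAt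

lemma exists_f (m N : ℝ) (hN : 0 < N) : ∃ (φ : ℝ → ℝ) (f : SchwartzMap ℝ ℂ), Continuous φ ∧
    (∀ x, 0 ≤ φ x) ∧ (∀ x, φ x ≤ 1) ∧ (∀ x ∈ Icc (5 * N / 4) (7 * N / 4), φ x = 1) ∧
    (∀ x, x ∉ Icc N (2 * N) → φ x = 0) ∧
    ∀ ξ, FT f ξ = Complex.exp (-(Complex.I * ((1/2 * |ξ| ^ m : ℝ) : ℂ))) * (φ ξ : ℂ) := by
  obtain ⟨φ, h1, h2, h3, h4, h5⟩ := exists_bumpN N hN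
  obtain ⟨f, hf⟩ := exists_schwartz_FT _ (G_smooth m N hN φ h1 h5)
    (HasCompactSupport.intro (isCompact_Icc (a := N) (b := 2 * N)) (fun x hx => by
      rw [h5 x hx]; simp))
  exact ⟨φ, f, h1.continuous, h2, h3, h4, h5, hf⟩

lemma uF_lower_s16 (m N : ℝ) (hm : 0 < m) (hm1 : m < 1) (hN : 0 < N) (φ : ℝ → ℝ) (f : ℝ → ℂ)
    (hc : Continuous φ) (hp : ∀ x, 0 ≤ φ x)
    (h1 : ∀ x ∈ Icc (5 * N / 4) (7 * N / 4), φ x = 1)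
    (h0 : ∀ x, x ∉ Icc N (2 * N) → φ x = 0)
    (hf : ∀ ξ, FT f ξ = Complex.exp (-(Complex.I * ((1/2 * |ξ| ^ m : ℝ) : ℂ))) * (φ ξ : ℂ))
    (t : ℝ) (ht : 1/2 ≤ t) (ht' : (t - 1/2) * N ^ m ≤ 1/2) :
    N / (8 * Real.pi) ≤ ‖uF m f 0 t‖ := by
  have hcs : HasCompactSupport φ :=
    HasCompactSupport.intro (isCompact_Icc (a := N) (b := 2 * N)) h0
  have hint : Integrable φ := hc.integrable_of_hasCompactSupport hcs
  have e1 : ∀ ξ : ℝ, Complex.exp (Complex.I * ((0 * ξ + t * |ξ| ^ m : ℝ) : ℂ)) * FT f ξ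
      = Complex.exp (((t - 1/2) * |ξ| ^ m : ℝ) * Complex.I) * (φ ξ : ℂ) := by
    intro ξ
    rw [hf, ← mul_assoc, ← Complex.exp_add]
    congr 2
    push_cast
    ring
  have hcont : Continuous fun ξ : ℝ =>
      Complex.exp (((t - 1/2) * |ξ| ^ m : ℝ) * Complex.I) * (φ ξ : ℂ) := by
    have : Continuous fun ξ : ℝ => |ξ| ^ m := continuous_abs.rpow_const (fun _ => Or.inr hm.le)
    fun_prop
  have hI : Integrable fun ξ : ℝ =>
      Complex.exp (((t - 1/2) * |ξ| ^ m : ℝ) * Complex.I) * (φ ξ : ℂ) := by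
    refine hcont.integrable_of_hasCompactSupport
      (HasCompactSupport.intro (isCompact_Icc (a := N) (b := 2 * N)) fun x hx => ?_)
    rw [h0 x hx]; simp
  have hre : ∀ ξ : ℝ, (1/2) * φ ξ ≤
      (Complex.exp (((t - 1/2) * |ξ| ^ m : ℝ) * Complex.I) * (φ ξ : ℂ)).re := by
    intro ξ
    rw [Complex.re_mul_ofReal, Complex.exp_ofReal_mul_I_re]
    by_cases hx : ξ ∈ Icc N (2 * N)
    · refine mul_le_mul_of_nonneg_right ?_ (hp ξ)
      have hξ : 0 < ξ := lt_of_lt_of_le hN hx.1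
      have a1 : |ξ| ^ m ≤ 2 * N ^ m := by
        rw [abs_of_pos hξ]
        calc ξ ^ m ≤ (2 * N) ^ m := Real.rpow_le_rpow hξ.le hx.2 hm.le
          _ = 2 ^ m * N ^ m := Real.mul_rpow (by norm_num) hN.le
          _ ≤ 2 * N ^ m := by
            refine mul_le_mul_of_nonneg_right ?_ (by positivity)
            simpa using Real.rpow_le_rpow_of_exponent_le (by norm_num : (1:ℝ) ≤ 2) hm1.le
      have a2 : (t - 1/2) * |ξ| ^ m ≤ 1 := by
        have := mul_le_mul_of_nonneg_left a1 (by linarith : 0 ≤ t - 1/2)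
        linarith
      have a3 : 0 ≤ (t - 1/2) * |ξ| ^ m := mul_nonneg (by linarith) (by positivity)
      have := Real.one_sub_sq_div_two_le_cos (x := (t - 1/2) * |ξ| ^ m)
      nlinarith
    · rw [h0 ξ hx]; simp
  have hφI : N / 2 ≤ ∫ ξ, φ ξ := by
    calc N / 2 = ∫ ξ in Icc (5 * N / 4) (7 * N / 4), (1:ℝ) := by
          simp [Measure.real]
          rw [ENNReal.toReal_ofReal] <;> linarith
      _ = ∫ ξ in Icc (5 * N / 4) (7 * N / 4), φ ξ :=
          setIntegral_congr_fun measurableSet_Icc (fun x hx => (h1 x hx).symm)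
      _ ≤ ∫ ξ, φ ξ := setIntegral_le_integral hint (Eventually.of_forall hp)
  have key : N / 4 ≤ ‖∫ ξ : ℝ, Complex.exp (((t - 1/2) * |ξ| ^ m : ℝ) * Complex.I) * (φ ξ : ℂ)‖ := by
    refine le_trans ?_ (Complex.re_le_norm _)
    have : (∫ ξ : ℝ, Complex.exp (((t - 1/2) * |ξ| ^ m : ℝ) * Complex.I) * (φ ξ : ℂ)).re
        = ∫ ξ : ℝ, (Complex.exp (((t - 1/2) * |ξ| ^ m : ℝ) * Complex.I) * (φ ξ : ℂ)).re :=
      (integral_re hI).symm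
    rw [this]
    calc N / 4 ≤ ∫ ξ, (1/2) * φ ξ := by rw [integral_const_mul]; linarith
      _ ≤ _ := integral_mono (hint.const_mul _) hI.re hre
  rw [uF, integral_congr_ae (Eventually.of_forall e1), norm_mul, Complex.norm_real,
    Real.norm_of_nonneg (by positivity)]
  calc N / (8 * Real.pi) = (2 * Real.pi)⁻¹ * (N / 4) := by
        field_simp; norm_num
    _ ≤ _ := mul_le_mul_of_nonneg_left key (by positivity)

lemma HsNorm_upper (m N s : ℝ) (hN : 1 ≤ N) (φ : ℝ → ℝ) (f : ℝ → ℂ)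
    (hp : ∀ x, 0 ≤ φ x) (hle : ∀ x, φ x ≤ 1)
    (h0 : ∀ x, x ∉ Icc N (2 * N) → φ x = 0)
    (hf : ∀ ξ, FT f ξ = Complex.exp (-(Complex.I * ((1/2 * |ξ| ^ m : ℝ) : ℂ))) * (φ ξ : ℂ)) :
    HsNorm s f ≤ ENNReal.ofReal ((5 ^ |s|) ^ (1/2 : ℝ) * N ^ (s + 1/2)) := by
  have hN0 : 0 < N := by linarith
  have hnorm : ∀ ξ, ‖FT f ξ‖ = φ ξ := by
    intro ξ
    rw [hf, norm_mul, Complex.norm_real, Real.norm_of_nonneg (hp ξ),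
      show -(Complex.I * ((1/2 * |ξ| ^ m : ℝ) : ℂ)) = ((-(1/2 * |ξ| ^ m) : ℝ) : ℂ) * Complex.I by
        push_cast; ring, Complex.norm_exp_ofReal_mul_I, one_mul]
  have hb : ∀ ξ ∈ Icc N (2 * N), (1 + ξ ^ 2) ^ s ≤ 5 ^ |s| * N ^ (2 * s) := by
    intro ξ hx
    have hN2 : N ^ (2 * s) = (N ^ 2) ^ s := by
      rw [Real.rpow_mul hN0.le]; norm_num
    rw [hN2]
    rcases le_total 0 s with hs | hs
    · rw [abs_of_nonneg hs, ← Real.mul_rpow (by norm_num) (by positivity)]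
      apply Real.rpow_le_rpow (by positivity) _ hs
      nlinarith [hx.1, hx.2]
    · have : (1 + ξ ^ 2) ^ s ≤ (N ^ 2) ^ s :=
        Real.rpow_le_rpow_of_nonpos (by positivity) (by nlinarith [hx.1]) hs
      have h5 : (1:ℝ) ≤ 5 ^ |s| := Real.one_le_rpow (by norm_num) (abs_nonneg s)
      have : 0 ≤ (N ^ 2) ^ s := by positivity
      nlinarith
  have hI : ∫⁻ ξ : ℝ, ENNReal.ofReal ((1 + ξ ^ 2) ^ s) * (‖FT f ξ‖₊ : ℝ≥0∞) ^ 2 ≤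
      ENNReal.ofReal (5 ^ |s| * N ^ (2 * s) * N) := by
    calc _ ≤ ∫⁻ ξ : ℝ, (Icc N (2 * N)).indicator
          (fun _ => ENNReal.ofReal (5 ^ |s| * N ^ (2 * s))) ξ := by
          refine lintegral_mono fun ξ => ?_
          have hn : (‖FT f ξ‖₊ : ℝ≥0∞) = ENNReal.ofReal (φ ξ) := by
            rw [← hnorm, ofReal_norm_eq_enorm]; rfl
          simp only [hn]
          by_cases hx : ξ ∈ Icc N (2 * N)
          · rw [indicator_of_mem hx]
            calc _ ≤ ENNReal.ofReal ((1 + ξ ^ 2) ^ s) * 1 := by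
                  gcongr
                  exact pow_le_one' (ENNReal.ofReal_le_one.mpr (hle ξ)) 2
              _ ≤ _ := by rw [mul_one]; exact ENNReal.ofReal_le_ofReal (hb ξ hx)
          · rw [indicator_of_notMem hx, h0 ξ hx]; simp
      _ = _ := by
          rw [lintegral_indicator measurableSet_Icc, setLIntegral_const, Real.volume_Icc,
            ← ENNReal.ofReal_mul (by positivity)]
          congr 1; ring
  rw [HsNorm]
  calc _ ≤ (ENNReal.ofReal (5 ^ |s| * N ^ (2 * s) * N)) ^ (1/2 : ℝ) :=
        ENNReal.rpow_le_rpow hI (by norm_num)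
    _ = _ := by
      rw [ENNReal.ofReal_rpow_of_nonneg (by positivity) (by norm_num), mul_assoc,
        Real.mul_rpow (by positivity) (by positivity)]
      congr 2
      nth_rw 2 [← Real.rpow_one N]
      rw [← Real.rpow_add hN0, ← Real.rpow_mul hN0.le]
      congr 1; ring

lemma sup_lower (m q r N : ℝ) (k : ℕ) (hq : 2 ≤ q) (hr0 : 0 < r) (hr1 : r < 1/2) (hN : 0 < N)
    (f : ℝ → ℂ)
    (hNk : N ^ m * r ^ k = 1)
    (hu : ∀ t, 1/2 ≤ t → (t - 1/2) * N ^ m ≤ 1/2 → N / (8 * Real.pi) ≤ ‖uF m f 0 t‖) :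
    ENNReal.ofReal (((1 - 2 * r) * r / 2) ^ (1/q) * ((2 * r) ^ k) ^ (1/q) * (N / (8 * Real.pi))) ≤
      (∫⁻ x in Set.Ioo (0:ℝ) 1,
          (⨆ t ∈ Set.Ioo (0:ℝ) 1,
            ⨆ θ ∈ CantorR r,
            (‖uF m f (x - θ * t) t‖₊ : ℝ≥0∞)) ^ q) ^ (1 / q) := by
  obtain ⟨F, hc, hF, hsep⟩ := cantorR_finset r hr0 hr1 k
  set δ : ℝ := (1 - 2 * r) * r * r ^ k with hδ
  have hrk : 0 < r ^ k := by positivity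
  have hrk1 : r ^ k ≤ 1 := pow_le_one₀ hr0.le (by linarith)
  have hc0 : 0 < (1 - 2 * r) * r := mul_pos (by linarith) hr0
  have hc1 : (1 - 2 * r) * r ≤ 1/2 := by nlinarith
  have hδ0 : 0 < δ := mul_pos hc0 hrk
  have hδ1 : δ ≤ 1/2 := by nlinarith
  have hq0 : 0 < q := by linarith
  let g : ℝ → ℝ := fun y => (1 - r) + r * y
  let J : ℝ → Set ℝ := fun y => Ico (g y / 2) (g y / 2 + δ / 2)
  set E : Set ℝ := ⋃ y ∈ F, J y with hE
  have hEm : MeasurableSet E := F.measurableSet_biUnion fun y _ => measurableSet_Ico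
  have hvol : volume E = ENNReal.ofReal (2 ^ k * (δ / 2)) := by
    rw [hE, measure_biUnion_finset _ (fun y _ => measurableSet_Ico)]
    · simp only [J, Real.volume_Ico, add_sub_cancel_left, Finset.sum_const, hc, nsmul_eq_mul]
      rw [ENNReal.ofReal_mul (by positivity)]
      congr 1
      rw [ENNReal.ofReal_pow (by norm_num)]
      simp
    · have aux : ∀ x ∈ F, ∀ y ∈ F, x < y → Disjoint (J x) (J y) := by
        intro x hx y hy h
        rw [Set.disjoint_left]
        intro z hz hz'
        have h1 := hsep x hx y hy h
        have h2 := hz.2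
        have h3 := hz'.1
        simp only [g] at h2 h3
        have := mul_le_mul_of_nonneg_left h1 hr0.le
        nlinarith
      intro x hx y hy hxy
      rcases lt_or_gt_of_ne hxy with h | h
      · exact aux x hx y hy h
      · exact (aux y hy x hx h).symm
  have hpt : ∀ x ∈ E, x ∈ Ioo (0:ℝ) 1 ∧ ENNReal.ofReal (N / (8 * Real.pi)) ≤
      ⨆ t ∈ Set.Ioo (0:ℝ) 1, ⨆ θ ∈ CantorR r, (‖uF m f (x - θ * t) t‖₊ : ℝ≥0∞) := by
    intro x hx
    simp only [hE, mem_iUnion] at hx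
    obtain ⟨y, hy, hx⟩ := hx
    obtain ⟨hyC, hy0, hy1⟩ := hF y hy
    have hgC : g y ∈ CantorR r := by simpa using cantorR_step r hr0 hr1 y hyC true
    have hg0 : 1/2 < g y := by simp only [g]; nlinarith
    have hg1 : g y ≤ 1 := by simp only [g]; nlinarith
    have hgp : 0 < g y := by linarith
    have hx1 : g y / 2 ≤ x := hx.1
    have hx2 : x < g y / 2 + δ / 2 := hx.2
    have ht1 : 1/2 ≤ x / g y := by rw [le_div_iff₀ hgp]; linarith
    have ht2 : x / g y < 1/2 + δ := by rw [div_lt_iff₀ hgp]; nlinarith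
    have hxt : g y * (x / g y) = x := by field_simp
    refine ⟨⟨by linarith, ?_⟩, ?_⟩
    · rw [← hxt]; nlinarith
    · refine le_trans ?_ (le_iSup₂_of_le (x / g y) ⟨by linarith, by linarith⟩
        (le_iSup₂_of_le (g y) hgC le_rfl))
      rw [hxt, sub_self]
      have := hu (x / g y) ht1 (by
        have hNm : 0 < N ^ m := by positivity
        calc (x / g y - 1/2) * N ^ m ≤ δ * N ^ m :=
              mul_le_mul_of_nonneg_right (by linarith) hNm.le
          _ = (1 - 2 * r) * r * (N ^ m * r ^ k) := by rw [hδ]; ring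
          _ ≤ 1/2 := by rw [hNk]; linarith)
      calc _ ≤ ENNReal.ofReal ‖uF m f 0 (x / g y)‖ := ENNReal.ofReal_le_ofReal this
        _ = _ := by rw [ofReal_norm_eq_enorm]; rfl
  have hEsub : E ⊆ Ioo (0:ℝ) 1 := fun x hx => (hpt x hx).1
  have hlow : ENNReal.ofReal (N / (8 * Real.pi)) ^ q * volume E ≤
      ∫⁻ x in Set.Ioo (0:ℝ) 1, (⨆ t ∈ Set.Ioo (0:ℝ) 1, ⨆ θ ∈ CantorR r,
            (‖uF m f (x - θ * t) t‖₊ : ℝ≥0∞)) ^ q := by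
    rw [← setLIntegral_const]
    refine le_trans (setLIntegral_mono' hEm fun x hx => ?_) (lintegral_mono_set hEsub)
    exact ENNReal.rpow_le_rpow (hpt x hx).2 hq0.le
  refine le_trans (le_of_eq ?_) (ENNReal.rpow_le_rpow hlow (by positivity : 0 ≤ 1 / q))
  have hM : 0 < N / (8 * Real.pi) := by positivity
  rw [hvol, ENNReal.ofReal_rpow_of_nonneg hM.le hq0.le, ← ENNReal.ofReal_mul (by positivity),
    ENNReal.ofReal_rpow_of_nonneg (by positivity) (by positivity)]
  congr 1
  rw [Real.mul_rpow (by positivity) (by positivity), ← Real.rpow_mul hM.le,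
    mul_one_div_cancel hq0.ne', Real.rpow_one, mul_comm]
  congr 1
  rw [← Real.mul_rpow (by positivity) (by positivity)]
  congr 1
  rw [hδ, mul_pow]; ring

/-- Sharpness along the `r`-Cantor set `Θ` of Minkowski dimension `β = log 2 / log(1/r)`:
if `s < 1/2 − m/q + mβ/q` then no constant `C` works in the maximal estimate along the
lines generated by `Θ`. -/
theorem stmt16 (m q r s : ℝ) (hm : 0 < m) (hm1 : m < 1) (hq : 2 ≤ q)
    (hr0 : 0 < r) (hr1 : r < 1/2)
    (hs : s < 1/2 - m / q + m * (Real.log 2 / Real.log (1/r)) / q) :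
    ¬ ∃ C > 0, ∀ f : SchwartzMap ℝ ℂ,
      (∫⁻ x in Set.Ioo (0:ℝ) 1,
          (⨆ t ∈ Set.Ioo (0:ℝ) 1,
            ⨆ θ ∈ {y : ℝ | ∃ a : ℕ → Bool,
                y = ∑' n : ℕ, (if a n then (1 - r) * r ^ n else 0)},
            (‖uF m (⇑f) (x - θ * t) t‖₊ : ℝ≥0∞)) ^ q) ^ (1 / q) ≤
        ENNReal.ofReal C * HsNorm s (⇑f) := by
  rintro ⟨C, hC, H⟩
  have hq0 : 0 < q := by linarith
  have hlr : Real.log r < 0 := Real.log_neg hr0 (by linarith)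
  set ρ : ℝ := r ^ (-(1/m)) with hρ
  have hρ1 : 1 < ρ := Real.one_lt_rpow_of_pos_of_lt_one_of_neg hr0 (by linarith)
    (by rw [neg_lt_zero]; positivity)
  have hρ0 : 0 < ρ := by linarith
  set β : ℝ := Real.log 2 / Real.log (1/r) with hβ
  have h2 : (2:ℝ) * r = ρ ^ (-(m * (1 - β))) := by
    rw [hρ, ← Real.rpow_mul hr0.le]
    have e : -(1/m) * -(m * (1 - β)) = 1 - β := by field_simp
    rw [e, Real.rpow_sub hr0, Real.rpow_one]
    have e2 : r ^ β = 1/2 := by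
      rw [Real.rpow_def_of_pos hr0, hβ, one_div, Real.log_inv]
      have : Real.log r * (Real.log 2 / -Real.log r) = - Real.log 2 := by
        have hne := hlr.ne
        field_simp
      rw [this, Real.exp_neg, Real.exp_log (by norm_num)]; norm_num
    rw [e2]; ring
  set A : ℝ := ((1 - 2 * r) * r / 2) ^ (1/q) / (8 * Real.pi) with hA
  have hA0 : 0 < A := by
    have : 0 < (1 - 2 * r) * r / 2 := by
      have := mul_pos (by linarith : 0 < 1 - 2 * r) hr0
      linarith
    positivity
  set B : ℝ := C * (5 ^ |s|) ^ (1/2 : ℝ) with hB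
  set γ : ℝ := -(m * (1 - β)) / q + 1 - (s + 1/2) with hγ
  have hγ0 : 0 < γ := by
    have : γ = (1/2 - m / q + m * β / q) - s := by rw [hγ]; ring
    linarith
  have key : ∀ k : ℕ, A * (ρ ^ γ) ^ k ≤ B := by
    intro k
    set N : ℝ := ρ ^ k with hN
    have hN1 : 1 ≤ N := one_le_pow₀ hρ1.le
    have hN0 : 0 < N := by linarith
    obtain ⟨φ, f, hφc, hp, hle, h1, h0, hf⟩ := exists_f m N hN0
    have hNk : N ^ m * r ^ k = 1 := by
      rw [hN, ← Real.rpow_natCast, ← Real.rpow_mul hρ0.le, mul_comm (k:ℝ), Real.rpow_mul hρ0.le,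
        Real.rpow_natCast, ← mul_pow, hρ, ← Real.rpow_mul hr0.le]
      have : -(1/m) * m = -1 := by field_simp
      rw [this, Real.rpow_neg_one, inv_mul_cancel₀ hr0.ne', one_pow]
    have l1 := sup_lower m q r N k hq hr0 hr1 hN0 f hNk
      (fun t ht ht' => uF_lower_s16 m N hm hm1 hN0 φ f hφc hp h1 h0 hf t ht ht')
    have l2 := HsNorm_upper m N s hN1 φ f hp hle h0 hf
    have l3 := l1.trans ((H f).trans (mul_le_mul_right l2 (ENNReal.ofReal C)))
    rw [← ENNReal.ofReal_mul hC.le, ENNReal.ofReal_le_ofReal_iff (by positivity)] at l3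
    have hNs : 0 < N ^ (s + 1/2) := by positivity
    have e3 : ((2 * r) ^ k) ^ (1/q) = N ^ (-(m * (1 - β)) / q) := by
      rw [h2, hN, ← Real.rpow_natCast, ← Real.rpow_natCast, ← Real.rpow_mul hρ0.le,
        ← Real.rpow_mul hρ0.le, ← Real.rpow_mul hρ0.le]
      congr 1; ring
    have e4 : (ρ ^ γ) ^ k = N ^ γ := by
      rw [hN, ← Real.rpow_natCast, ← Real.rpow_natCast, ← Real.rpow_mul hρ0.le,
        ← Real.rpow_mul hρ0.le, mul_comm]
    have e5 : N ^ γ * N ^ (s + 1/2) = N ^ (-(m * (1 - β)) / q) * N := by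
      nth_rw 4 [← Real.rpow_one N]
      rw [← Real.rpow_add hN0, ← Real.rpow_add hN0]
      congr 1; rw [hγ]; ring
    rw [e4]
    refine le_of_mul_le_mul_right ?_ hNs
    rw [mul_assoc, e5, hB, hA]
    rw [e3] at l3
    calc _ = _ := by ring
      _ ≤ _ := l3
      _ = _ := by ring
  have hgt : 1 < ρ ^ γ := Real.one_lt_rpow hρ1 hγ0
  obtain ⟨k, hk⟩ := pow_unbounded_of_one_lt (B / A) hgt
  have := key k
  rw [div_lt_iff₀ hA0] at hk
  linarith
end
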